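/- The Pacman cellular automaton (X,T) has no equicontinuity points; in particular it is not almost equicontinuous and is sensitive to initial conditions: there exists δ > 0 such that for every x ∈ X and every η > 0 there exist y ∈ B_η(x) and n ∈ ℕ with d(T^n x, T^n y) > δ. -/

import Mathlib

/-!
Doors never move, ghosts (`G`, `K`, `E`) travel left, pacmen travel right. Call a cell *occupied*
when it holds neither empty space nor an empty door. The argument compares two points that both
agree with a given `x` on `[-N, N]`: the point `y₁ = ⋯0 0 w D 0 0⋯` and the point `y₂` obtained
from `y₁` by adding a keymaster `K` far to the right.

* **Extinction** (`eventually_clean`). In a configuration with finitely many doors, only `0, G, K`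
  to the left of a cell `L`, and only finitely many keymasters to the right of the last door, all
  cells of `[L, ∞)` are eventually unoccupied. Indeed a particle goes through the cycle
  "ghost moving left, reflected at a door as a pacman, turned into a keymaster at the next door,
  passing through the first door". The function `rank` measures the progress (number of doors to
  the left, then stage of the cycle, then distance to travel), and each particle at time `t + 1`
  has a parent particle at time `t`, at distance at most one, of strictly greater rank
  (`exists_parent`).
* **Survival** (`survive`). If cells `0, 1` are unoccupied and some cell of `[2, ∞)` is occupied,
  then after one step some cell of `[1, ∞)` is occupied: follow the leftmost particle.

Both `y₁` and `y₂` become extinct. Let `M` be the extinction time of `y₁`, and place the additional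
`K` so far away that at time `M` it still lies to the right of the last door. If the orbits of
`y₁` and `y₂` agreed at the cells `0, 1` for all times, then from time `M` on these two cells
would be unoccupied in the orbit of `y₂`, so by survival a particle would stay in `[2, ∞)` forever,
contradicting extinction. Hence the orbits of `y₁` and `y₂` differ at `0` or `1` at some time, and
one of them is then far from that of `x`. This is sensitivity, which rules out equicontinuity
points. Since the full shift is a Baire space, the empty set is not residual.
-/

/-- The six-letter alphabet of the Pacman cellular automaton:
`O` = empty space, `D` = empty door, `P` = pacman, `G` = ghost,
`K` = keymaster ghost, `E` = door with ghost. -/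
inductive PacSym : Type
  | O | D | P | G | K | E
  deriving DecidableEq

open PacSym

/-- The radius-1 local rule `f(a,b,c)` of the Pacman cellular automaton. -/
def pacRule (a b c : PacSym) : PacSym :=
  if ((a = O ∨ a = G ∨ a = K) ∧
        (((b = O ∨ b = G ∨ b = K) ∧ (c = O ∨ c = D ∨ c = P)) ∨
          (b = P ∧ ¬(c = D ∨ c = E)))) ∨
      ((a = D ∨ a = E) ∧
        (((b = O ∨ b = K) ∧ (c = O ∨ c = D ∨ c = P)) ∨
          (b = P ∧ ¬(c = D ∨ c = E)))) then O
  else if (b = D ∨ b = E) ∧ ¬(c = K ∨ c = E) then D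
  else if ((a = O ∨ a = G ∨ a = K) ∧ (b = O ∨ b = G ∨ b = K) ∧ (c = G ∨ c = E)) ∨
      ((a = D ∨ a = E) ∧ (b = O ∨ b = K) ∧ c = E) then G
  else if (c = K ∧ (((a = O ∨ a = G ∨ a = K) ∧ (b = O ∨ b = G ∨ b = K)) ∨
        ((a = D ∨ a = E) ∧ (b = O ∨ b = K)))) ∨
      (a = P ∧ ¬(b = D ∨ b = E) ∧ (c = D ∨ c = E)) ∨
      (b = P ∧ (c = D ∨ c = E)) then K
  else if (a = D ∧ (((b = O ∨ b = K) ∧ c = G) ∨ b = G)) ∨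
      (a = P ∧ ¬(b = D ∨ b = E) ∧ ¬(c = D ∨ c = E)) then P
  else if (b = D ∨ b = E) ∧ (c = K ∨ c = E) then E
  else O

/-- The full shift `X = A^ℤ` over the Pacman alphabet. -/
abbrev PacX : Type := ℤ → PacSym

/-- The Pacman cellular automaton `T : X → X`, `(Tx)_i = f(x_{i-1}, x_i, x_{i+1})`. -/
def pacT (x : PacX) : PacX := fun i => pacRule (x (i - 1)) (x i) (x (i + 1))

open Classical in
/-- The metric `d(x,y) = 2^{-min{|j| : x_j ≠ y_j}}` for `x ≠ y`, and `0` otherwise. -/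
noncomputable def pdist (x y : PacX) : ℝ :=
  if x = y then 0
  else (2 : ℝ) ^ (-((sInf {n : ℕ | ∃ j : ℤ, j.natAbs = n ∧ x j ≠ y j} : ℕ) : ℤ))

/-- The open ball `B_δ(x) = {y : d(x,y) < δ}`. -/
def pball (x : PacX) (δ : ℝ) : Set PacX := {y | pdist x y < δ}

/-- The diameter of a set: `diam S = sup {d(a,b) : a, b ∈ S}`. -/
noncomputable def pdiam (S : Set PacX) : ℝ := sSup (Set.image2 pdist S S)

/-- The point `x^{w,i} = ⋯0 0.w D 0^i K 0 0⋯`. -/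
def xPt (w : List PacSym) (i : ℕ) : PacX := fun j =>
  if 0 ≤ j ∧ j < (w.length : ℤ) then w.getD j.toNat O
  else if j = (w.length : ℤ) then D
  else if j = (w.length : ℤ) + 1 + (i : ℤ) then K
  else O

/-- The point `x^{w} = ⋯0 0.w D 0 0⋯`. -/
def yPt (w : List PacSym) : PacX := fun j =>
  if 0 ≤ j ∧ j < (w.length : ℤ) then w.getD j.toNat O
  else if j = (w.length : ℤ) then D
  else O

/-- `x` is an equicontinuity point of the Pacman CA. -/
def eqPt (x : PacX) : Prop :=
  ∀ ε > (0 : ℝ), ∃ δ > (0 : ℝ), ∀ i : ℕ, pdiam (pacT^[i] '' pball x δ) < ε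

/-- The cell content is a particle: neither empty space nor an empty door. -/
def IsPart (s : PacSym) : Prop := s ≠ O ∧ s ≠ D

/-- The cell content is a door, with or without a ghost in it. -/
def IsDoor (s : PacSym) : Prop := s = D ∨ s = E

instance : DecidablePred IsPart := fun s => by unfold IsPart; infer_instance
instance : DecidablePred IsDoor := fun s => by unfold IsDoor; infer_instance

/-! ### The local rule -/

lemma rule_door (a b c : PacSym) : IsDoor (pacRule a b c) ↔ IsDoor b := by
  cases a <;> cases b <;> cases c <;> decide

lemma rule_left (a b c : PacSym) (ha : a = O ∨ a = G ∨ a = K) (hb : b = O ∨ b = G ∨ b = K) :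
    pacRule a b c = O ∨ pacRule a b c = G ∨ pacRule a b c = K := by
  revert ha hb
  cases a <;> cases b <;> cases c <;> decide

lemma rule_right (a b c : PacSym) (ha : (a = O ∨ a = K) ∨ IsDoor a) (hb : b = O ∨ b = K)
    (hc : c = O ∨ c = K) : pacRule a b c = c := by
  revert ha hb hc
  cases a <;> cases b <;> cases c <;> decide

lemma rule_eq_E (a b c : PacSym) (h : pacRule a b c = E) : IsDoor b ∧ (c = K ∨ c = E) := by
  revert h
  cases a <;> cases b <;> cases c <;> decide

lemma rule_eq_G (a b c : PacSym) (h : pacRule a b c = G) : ¬ IsDoor b ∧ (c = G ∨ c = E) := by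
  revert h
  cases a <;> cases b <;> cases c <;> decide

lemma rule_eq_K (a b c : PacSym) (h : pacRule a b c = K) :
    ¬ IsDoor b ∧ (c = K ∨ a = P ∨ b = P) := by
  revert h
  cases a <;> cases b <;> cases c <;> decide

lemma rule_eq_P (a b c : PacSym) (h : pacRule a b c = P) :
    ¬ IsDoor b ∧ (c = G ∨ b = G ∨ a = P) := by
  revert h
  cases a <;> cases b <;> cases c <;> decide

/-! ### Bounded configurations and extinction -/

/-- `x` has door set `S`, contains only `0, G, K` to the left of `L`, only `0, K` to the right of
the door `m`, and only `0` to the right of `R`. -/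
structure Bdd (L m R : ℤ) (S : ℤ → Prop) (x : PacX) : Prop where
  le : m ≤ R
  door : ∀ i, IsDoor (x i) ↔ S i
  last : S m
  left : ∀ i, i < L → x i = O ∨ x i = G ∨ x i = K
  right : ∀ i, m < i → x i = O ∨ x i = K
  zero : ∀ i, R < i → x i = O

lemma Bdd.prev {L m R : ℤ} {S : ℤ → Prop} {x : PacX} (h : Bdd L m R S x) {i : ℤ} (hi : m < i) :
    (x (i - 1) = O ∨ x (i - 1) = K) ∨ IsDoor (x (i - 1)) := by
  rcases eq_or_lt_of_le (show m ≤ i - 1 by lia) with h1 | h1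
  · right
    rw [← h1]
    exact (h.door m).2 h.last
  · exact Or.inl (h.right _ h1)

lemma Bdd.step_right {L m R : ℤ} {S : ℤ → Prop} {x : PacX} (h : Bdd L m R S x) {i : ℤ}
    (hi : m < i) : pacT x i = x (i + 1) :=
  rule_right _ _ _ (h.prev hi) (h.right _ hi) (h.right _ (by lia))

lemma Bdd.step {L m R : ℤ} {S : ℤ → Prop} {x : PacX} (h : Bdd L m R S x) :
    Bdd L m R S (pacT x) where
  le := h.le
  door i := (rule_door _ _ _).trans (h.door i)
  last := h.last
  left i hi := rule_left _ _ _ (h.left _ (by lia)) (h.left _ hi)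
  right i hi := by
    rw [h.step_right hi]
    exact h.right _ (by lia)
  zero i hi := by
    rw [h.step_right (lt_of_le_of_lt h.le hi)]
    exact h.zero _ (by lia)

lemma Bdd.iter {L m R : ℤ} {S : ℤ → Prop} {x : PacX} (h : Bdd L m R S x) (t : ℕ) :
    Bdd L m R S (pacT^[t] x) := by
  induction t with
  | zero => exact h
  | succ t ih =>
    rw [Function.iterate_succ_apply']
    exact ih.step

open Classical in
/-- The number of doors in `[L, i)`. -/
noncomputable def cnt (L : ℤ) (S : ℤ → Prop) (i : ℤ) : ℤ :=
  ((Finset.Ico L i).filter S).card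

lemma cnt_succ_of {L : ℤ} {S : ℤ → Prop} {i : ℤ} (hi : L ≤ i) (hS : S i) :
    cnt L S (i + 1) = cnt L S i + 1 := by
  unfold cnt
  rw [← Finset.insert_Ico_right_eq_Ico_add_one hi, Finset.filter_insert, if_pos hS,
    Finset.card_insert_of_notMem (by simp)]
  push_cast
  rfl

lemma cnt_succ_of_not {L : ℤ} {S : ℤ → Prop} {i : ℤ} (hi : L ≤ i) (hS : ¬ S i) :
    cnt L S (i + 1) = cnt L S i := by
  unfold cnt
  rw [← Finset.insert_Ico_right_eq_Ico_add_one hi, Finset.filter_insert, if_neg hS]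

lemma cnt_nonneg (L : ℤ) (S : ℤ → Prop) (i : ℤ) : 0 ≤ cnt L S i := by
  unfold cnt
  positivity

lemma cnt_le {L : ℤ} (S : ℤ → Prop) {i : ℤ} (hi : L ≤ i) : cnt L S i ≤ i - L := by
  classical
  have h : ((Finset.Ico L i).filter S).card ≤ (Finset.Ico L i).card := Finset.card_filter_le _ _
  rw [Int.card_Ico] at h
  unfold cnt
  have h2 : (((Finset.Ico L i).filter S).card : ℤ) ≤ ((i - L).toNat : ℤ) := by exact_mod_cast h
  rw [Int.toNat_of_nonneg (by lia)] at h2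
  convert h2

/-- The stage of a particle at `i` within its cycle `E → G → P → K`, refined by the distance it may
still travel; values of consecutive stages lie in consecutive blocks, all of them in
`[0, 5 (R - L + 1))`. -/
def stage (L R i : ℤ) : PacSym → ℤ
  | E => 4 * (R - L + 1)
  | G => 3 * (R - L + 1) + (i - L)
  | P => (R - L + 1) + (R - i)
  | K => i - L
  | _ => 0

/-- The rank of a particle `s` at `i`: the lexicographic combination of the number of doors to its
left and its stage. -/
noncomputable def rank (L R : ℤ) (S : ℤ → Prop) (i : ℤ) (s : PacSym) : ℤ :=
  cnt L S i * (5 * (R - L + 1)) + stage L R i s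

/-- Every particle of `T x` in `[L, ∞)` stems from a particle of `x` in `[L, ∞)` of greater rank. -/
lemma exists_parent {L m R : ℤ} {S : ℤ → Prop} {x : PacX} (h : Bdd L m R S x) {i : ℤ}
    (hi : L ≤ i) (hp : IsPart (pacT x i)) :
    ∃ j, L ≤ j ∧ IsPart (x j) ∧ rank L R S i (pacT x i) < rank L R S j (x j) := by
  have hR : i ≤ R := by
    by_contra hc
    exact hp.1 (h.step.zero i (by lia))
  have hR' : ∀ j, IsPart (x j) → j ≤ R := fun j hj => by
    by_contra hc
    exact hj.1 (h.zero j (by lia))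
  have hL : x (i - 1) = P → L ≤ i - 1 := fun hP => by
    by_contra hc
    have := h.left (i - 1) (by lia)
    simp [hP] at this
  have hnP : x (i - 1) = P → cnt L S i = cnt L S (i - 1) := fun hP => by
    have := cnt_succ_of_not (S := S) (hL hP) (by rw [← h.door, hP]; decide)
    rwa [sub_add_cancel] at this
  have hnS : ¬ IsDoor (x i) → cnt L S (i + 1) = cnt L S i := fun hd =>
    cnt_succ_of_not hi (by rwa [← h.door])
  have key : ∀ s, pacT x i = s → IsPart s →
      ∃ j, L ≤ j ∧ IsPart (x j) ∧ rank L R S i s < rank L R S j (x j) := by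
    intro s hs hsp
    cases s with
    | O => exact absurd rfl hsp.1
    | D => exact absurd rfl hsp.2
    | E =>
      obtain ⟨hd, hc⟩ := rule_eq_E _ _ _ hs
      have hcnt := cnt_succ_of hi ((h.door i).1 hd)
      have hpart : IsPart (x (i + 1)) := by rcases hc with hc | hc <;> rw [hc] <;> decide
      have := hR' _ hpart
      refine ⟨i + 1, by lia, hpart, ?_⟩
      unfold rank
      rw [hcnt, add_mul]
      rcases hc with hc | hc <;> simp only [hc, stage] <;> linarith
    | G =>
      obtain ⟨hd, hc⟩ := rule_eq_G _ _ _ hs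
      have hpart : IsPart (x (i + 1)) := by rcases hc with hc | hc <;> rw [hc] <;> decide
      have := hR' _ hpart
      refine ⟨i + 1, by lia, hpart, ?_⟩
      unfold rank
      rw [hnS hd]
      rcases hc with hc | hc <;> simp only [hc, stage] <;> linarith
    | K =>
      obtain ⟨hd, hc | hc | hc⟩ := rule_eq_K _ _ _ hs
      · refine ⟨i + 1, by lia, by rw [hc]; decide, ?_⟩
        unfold rank
        rw [hnS hd]
        simp only [hc, stage]
        linarith
      · refine ⟨i - 1, hL hc, by rw [hc]; decide, ?_⟩
        unfold rank
        rw [hnP hc]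
        simp only [hc, stage]
        linarith
      · refine ⟨i, hi, by rw [hc]; decide, ?_⟩
        unfold rank
        simp only [hc, stage]
        linarith
    | P =>
      obtain ⟨hd, hc | hc | hc⟩ := rule_eq_P _ _ _ hs
      · refine ⟨i + 1, by lia, by rw [hc]; decide, ?_⟩
        unfold rank
        rw [hnS hd]
        simp only [hc, stage]
        linarith
      · refine ⟨i, hi, by rw [hc]; decide, ?_⟩
        unfold rank
        simp only [hc, stage]
        linarith
      · refine ⟨i - 1, hL hc, by rw [hc]; decide, ?_⟩
        unfold rank
        rw [hnP hc]
        simp only [hc, stage]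
        linarith
  exact key _ rfl hp

lemma exists_ancestor {L m R : ℤ} {S : ℤ → Prop} {x : PacX} (h : Bdd L m R S x) (t : ℕ) :
    ∀ i, L ≤ i → IsPart (pacT^[t] x i) →
      ∃ j, L ≤ j ∧ IsPart (x j) ∧ rank L R S i (pacT^[t] x i) + t ≤ rank L R S j (x j) := by
  induction t with
  | zero => exact fun i hi hp => ⟨i, hi, hp, by simp⟩
  | succ t ih =>
    intro i hi hp
    rw [Function.iterate_succ_apply'] at hp ⊢
    obtain ⟨j, hj, hjp, hlt⟩ := exists_parent (h.iter t) hi hp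
    obtain ⟨k, hk, hkp, hle⟩ := ih j hj hjp
    refine ⟨k, hk, hkp, ?_⟩
    push_cast
    lia

lemma rank_bounds {L R : ℤ} (S : ℤ → Prop) {i : ℤ} (hL : L ≤ i) (hR : i ≤ R) (s : PacSym) :
    0 ≤ rank L R S i s ∧ rank L R S i s ≤ (R - L) * (5 * (R - L + 1)) + 5 * (R - L + 1) := by
  have h0 := cnt_nonneg L S i
  have h1 : cnt L S i ≤ R - L := (cnt_le S hL).trans (by lia)
  have h2 : 0 ≤ cnt L S i * (5 * (R - L + 1)) := mul_nonneg h0 (by lia)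
  have h3 : cnt L S i * (5 * (R - L + 1)) ≤ (R - L) * (5 * (R - L + 1)) :=
    mul_le_mul_of_nonneg_right h1 (by lia)
  unfold rank
  cases s <;> simp only [stage] <;> constructor <;> linarith

/-- Extinction: from some time on there is no particle in `[L, ∞)`. -/
lemma eventually_clean {L m R : ℤ} {S : ℤ → Prop} {x : PacX} (h : Bdd L m R S x) :
    ∃ M : ℕ, ∀ t, M ≤ t → ∀ i, L ≤ i → ¬ IsPart (pacT^[t] x i) := by
  refine ⟨((R - L) * (5 * (R - L + 1)) + 5 * (R - L + 1)).toNat + 1, fun t ht i hi hp => ?_⟩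
  obtain ⟨j, hj, hjp, hle⟩ := exists_ancestor h t i hi hp
  have hiR : i ≤ R := by
    by_contra hc
    exact hp.1 ((h.iter t).zero i (by lia))
  have hjR : j ≤ R := by
    by_contra hc
    exact hjp.1 (h.zero j (by lia))
  have h1 := (rank_bounds S hi hiR (pacT^[t] x i)).1
  have h2 := (rank_bounds S hj hjR (x j)).2
  have h3 := Int.self_le_toNat ((R - L) * (5 * (R - L + 1)) + 5 * (R - L + 1))
  have h4 : ((((R - L) * (5 * (R - L + 1)) + 5 * (R - L + 1)).toNat : ℤ) + 1) ≤ t := by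
    exact_mod_cast ht
  linarith

/-! ### Survival of the leftmost particle -/

/-- A ghost at `c` with two unoccupied cells `a, b` to its left, and any cell `d` to its right,
leaves a particle in its own cell or in the one to its left. -/
lemma rule_survive_ghost (a b c d : PacSym) (ha : ¬ IsPart a) (hb : ¬ IsPart b) (hc : IsPart c)
    (hcP : c ≠ P) : IsPart (pacRule a b c) ∨ IsPart (pacRule b c d) := by
  revert ha hb hc hcP
  cases a <;> cases b <;> cases c <;> cases d <;> decide

lemma rule_survive_pacman (b c d : PacSym) : IsPart (pacRule b P c) ∨ IsPart (pacRule P c d) := by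
  cases b <;> cases c <;> cases d <;> decide

lemma survive {x : PacX} (h0 : ¬ IsPart (x 0)) (h1 : ¬ IsPart (x 1))
    (h : ∃ p, 2 ≤ p ∧ IsPart (x p)) : ∃ q, 1 ≤ q ∧ IsPart (pacT x q) := by
  have hex : ∃ k : ℕ, IsPart (x k) := by
    obtain ⟨p, hp, hx⟩ := h
    exact ⟨p.toNat, by rwa [Int.toNat_of_nonneg (by lia)]⟩
  -- `k` is the leftmost occupied cell of `[0, ∞)`
  obtain ⟨k, hk, hmin⟩ : ∃ k : ℕ, IsPart (x k) ∧ ∀ l < k, ¬ IsPart (x (l : ℤ)) :=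
    ⟨Nat.find hex, Nat.find_spec hex, fun l hl => Nat.find_min hex hl⟩
  have hk2 : 2 ≤ k := by
    by_contra hc
    rcases (show k = 0 ∨ k = 1 by lia) with rfl | rfl
    · exact h0 (by simpa using hk)
    · exact h1 (by simpa using hk)
  obtain ⟨n, rfl⟩ : ∃ n, k = n + 2 := ⟨k - 2, by lia⟩
  have ha := hmin n (by lia)
  have hb := hmin (n + 1) (by lia)
  push_cast at ha hb hk
  have e1 : pacT x ((n : ℤ) + 1) = pacRule (x n) (x (n + 1)) (x (n + 2)) := by
    unfold pacT
    rw [show (n : ℤ) + 1 - 1 = n by ring, show (n : ℤ) + 1 + 1 = n + 2 by ring]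
  have e2 : pacT x ((n : ℤ) + 2) = pacRule (x (n + 1)) (x (n + 2)) (x (n + 3)) := by
    unfold pacT
    rw [show (n : ℤ) + 2 - 1 = n + 1 by ring, show (n : ℤ) + 2 + 1 = n + 3 by ring]
  have e3 : pacT x ((n : ℤ) + 3) = pacRule (x (n + 2)) (x (n + 3)) (x (n + 4)) := by
    unfold pacT
    rw [show (n : ℤ) + 3 - 1 = n + 2 by ring, show (n : ℤ) + 3 + 1 = n + 4 by ring]
  by_cases hP : x (n + 2) = P
  · rcases rule_survive_pacman (x (n + 1)) (x (n + 3)) (x (n + 4)) with h | h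
    · exact ⟨n + 2, by lia, by rwa [e2, hP]⟩
    · exact ⟨n + 3, by lia, by rwa [e3, hP]⟩
  · rcases rule_survive_ghost _ _ _ (x (n + 3)) ha hb hk hP with h | h
    · exact ⟨n + 1, by lia, by rwa [e1]⟩
    · exact ⟨n + 2, by lia, by rwa [e2]⟩

/-! ### The two comparison points -/

/-- The restriction of `x` to `[-N, N]`, followed by a door and padded with empty space. -/
def basePt (x : PacX) (N : ℕ) : PacX := fun j =>
  if -(N : ℤ) ≤ j ∧ j ≤ N then x j else if j = N + 1 then D else O

/-- `basePt x N` with an additional keymaster at `N + 2 + k`. -/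
def keyPt (x : PacX) (N k : ℕ) : PacX := fun j =>
  if j = N + 2 + k then K else basePt x N j

lemma basePt_bdd (x : PacX) (N : ℕ) :
    Bdd (-N) (N + 1) (N + 1) (fun i => IsDoor (basePt x N i)) (basePt x N) where
  le := le_rfl
  door _ := Iff.rfl
  last := by
    left
    simp [basePt]
  left i hi := by
    left
    unfold basePt
    rw [if_neg (by lia), if_neg (by lia)]
  right i hi := by
    left
    unfold basePt
    rw [if_neg (by lia), if_neg (by lia)]
  zero i hi := by
    unfold basePt
    rw [if_neg (by lia), if_neg (by lia)]

lemma keyPt_bdd (x : PacX) (N k : ℕ) :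
    Bdd (-N) (N + 1) (N + 2 + k) (fun i => IsDoor (keyPt x N k i)) (keyPt x N k) where
  le := by lia
  door _ := Iff.rfl
  last := by
    left
    unfold keyPt basePt
    rw [if_neg (by lia), if_neg (by lia), if_pos rfl]
  left i hi := by
    left
    unfold keyPt basePt
    rw [if_neg (by lia), if_neg (by lia), if_neg (by lia)]
  right i hi := by
    unfold keyPt basePt
    rw [if_neg (c := -(N : ℤ) ≤ i ∧ i ≤ N) (by lia), if_neg (c := i = N + 1) (by lia)]
    split_ifs <;> simp
  zero i hi := by
    unfold keyPt basePt
    rw [if_neg (by lia), if_neg (by lia), if_neg (by lia)]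

lemma keyPt_iter (x : PacX) (N k : ℕ) (t : ℕ) :
    ∀ j : ℤ, (N : ℤ) + 1 < j → pacT^[t] (keyPt x N k) j = keyPt x N k (j + t) := by
  induction t with
  | zero => simp
  | succ t ih =>
    intro j hj
    rw [Function.iterate_succ_apply', ((keyPt_bdd x N k).iter t).step_right hj, ih _ (by lia)]
    congr 1
    push_cast
    ring

/-- Some two points agreeing with `x` on `[-N, N]` have orbits that differ at `0` or `1` at some
time. -/
lemma exists_differ (x : PacX) (N : ℕ) (hN : 1 ≤ N) :
    ∃ y z : PacX, (∀ j : ℤ, j.natAbs ≤ N → x j = y j) ∧ (∀ j : ℤ, j.natAbs ≤ N → x j = z j) ∧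
      ∃ n : ℕ, pacT^[n] y 0 ≠ pacT^[n] z 0 ∨ pacT^[n] y 1 ≠ pacT^[n] z 1 := by
  obtain ⟨M, hM⟩ := eventually_clean (basePt_bdd x N)
  obtain ⟨M', hM'⟩ := eventually_clean (keyPt_bdd x N M)
  refine ⟨basePt x N, keyPt x N M, fun j hj => ?_, fun j hj => ?_, ?_⟩
  · unfold basePt
    rw [if_pos (by lia)]
  · unfold keyPt basePt
    rw [if_neg (by lia), if_pos (by lia)]
  by_contra! hne
  have hclean : ∀ t, M ≤ t → ¬ IsPart (pacT^[t] (keyPt x N M) 0) ∧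
      ¬ IsPart (pacT^[t] (keyPt x N M) 1) := fun t ht => by
    rw [← (hne t).1, ← (hne t).2]
    exact ⟨hM t ht 0 (by lia), hM t ht 1 (by lia)⟩
  have hpers : ∀ s : ℕ, ∃ p, 2 ≤ p ∧ IsPart (pacT^[M + s] (keyPt x N M) p) := by
    intro s
    induction s with
    | zero =>
      -- at time `M` the keymaster has just reached the cell to the right of the last door
      refine ⟨N + 2, by lia, ?_⟩
      rw [add_zero, keyPt_iter _ _ _ _ _ (by lia)]
      unfold keyPt
      rw [if_pos rfl]
      decide
    | succ s ih =>
      have hc := hclean (M + s) (by lia)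
      obtain ⟨q, hq, hqp⟩ := survive hc.1 hc.2 ih
      have e : pacT^[M + (s + 1)] (keyPt x N M) = pacT (pacT^[M + s] (keyPt x N M)) := by
        rw [← add_assoc, Function.iterate_succ_apply']
      rw [← e] at hqp
      have hq1 : q ≠ 1 := by
        rintro rfl
        exact (hclean (M + (s + 1)) (by lia)).2 hqp
      exact ⟨q, by lia, hqp⟩
  obtain ⟨p, hp, hpp⟩ := hpers M'
  exact hM' (M + M') (by lia) p (by lia) hpp

/-! ### The metric -/

lemma pdist_self (x : PacX) : pdist x x = 0 := by simp [pdist]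

lemma pdist_le_one (x y : PacX) : pdist x y ≤ 1 := by
  unfold pdist
  split_ifs
  · exact zero_le_one
  · exact zpow_le_one_of_nonpos₀ (by norm_num) (by lia)

lemma pdist_lt_of_agree {x y : PacX} {N : ℕ} (h : ∀ j : ℤ, j.natAbs ≤ N → x j = y j) :
    pdist x y < (2 : ℝ) ^ (-(N : ℤ)) := by
  unfold pdist
  split_ifs with hxy
  · positivity
  · apply zpow_lt_zpow_right₀ (by norm_num)
    obtain ⟨j, hj⟩ := Function.ne_iff.1 hxy
    obtain ⟨i, hi, hne⟩ := Nat.sInf_mem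
      (s := {n : ℕ | ∃ j : ℤ, j.natAbs = n ∧ x j ≠ y j}) ⟨j.natAbs, j, rfl, hj⟩
    rw [← hi]
    have : ¬ i.natAbs ≤ N := fun hc => hne (h i hc)
    lia

lemma le_pdist_of_ne {x y : PacX} {j : ℤ} (h : x j ≠ y j) :
    (2 : ℝ) ^ (-(j.natAbs : ℤ)) ≤ pdist x y := by
  unfold pdist
  rw [if_neg (fun hxy => h (by rw [hxy]))]
  apply zpow_le_zpow_right₀ (by norm_num)
  have : sInf {n : ℕ | ∃ j : ℤ, j.natAbs = n ∧ x j ≠ y j} ≤ j.natAbs := Nat.sInf_le ⟨j, rfl, h⟩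
  lia

lemma exists_radius {ε : ℝ} (hε : 0 < ε) : ∃ N : ℕ, 1 ≤ N ∧ (2 : ℝ) ^ (-(N : ℤ)) < ε := by
  obtain ⟨n, hn⟩ := exists_pow_lt_of_lt_one hε (show (1 / 2 : ℝ) < 1 by norm_num)
  refine ⟨n + 1, by lia, lt_of_le_of_lt ?_ hn⟩
  rw [zpow_neg, zpow_natCast, one_div, inv_pow]
  gcongr
  · norm_num
  · lia

lemma quarter_lt_pdist {x y : PacX} (h : x 0 ≠ y 0 ∨ x 1 ≠ y 1) : 1 / 4 < pdist x y := by
  rcases h with h | h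
  · refine lt_of_lt_of_le ?_ (le_pdist_of_ne h)
    norm_num
  · refine lt_of_lt_of_le ?_ (le_pdist_of_ne h)
    norm_num

lemma sensitive (x : PacX) (η : ℝ) (hη : 0 < η) :
    ∃ y : PacX, pdist x y < η ∧ ∃ n : ℕ, pdist (pacT^[n] x) (pacT^[n] y) > 1 / 4 := by
  obtain ⟨N, hN, hNη⟩ := exists_radius hη
  obtain ⟨y, z, hy, hz, n, hn⟩ := exists_differ x N hN
  by_cases hxy : pacT^[n] x 0 = pacT^[n] y 0 ∧ pacT^[n] x 1 = pacT^[n] y 1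
  · refine ⟨z, (pdist_lt_of_agree hz).trans hNη, n, quarter_lt_pdist ?_⟩
    rwa [hxy.1, hxy.2]
  · exact ⟨y, (pdist_lt_of_agree hy).trans hNη, n, quarter_lt_pdist (not_and_or.1 hxy)⟩

lemma not_eqPt (x : PacX) : ¬ eqPt x := by
  intro h
  obtain ⟨δ, hδ, hd⟩ := h (1 / 4) (by norm_num)
  obtain ⟨y, hy, n, hn⟩ := sensitive x δ hδ
  have hbdd : BddAbove (Set.image2 pdist (pacT^[n] '' pball x δ) (pacT^[n] '' pball x δ)) := by
    refine ⟨1, ?_⟩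
    rintro _ ⟨a, -, b, -, rfl⟩
    exact pdist_le_one a b
  have hx : x ∈ pball x δ := by
    change pdist x x < δ
    rwa [pdist_self]
  have := le_csSup hbdd
    (Set.mem_image2_of_mem (Set.mem_image_of_mem _ hx) (Set.mem_image_of_mem _ hy))
  have h2 := hd n
  unfold pdiam at h2
  linarith

/-! ### Baire category -/

instance : Finite PacSym := by
  refine Set.finite_univ_iff.1 (Set.Finite.subset (Set.toFinite {O, D, P, G, K, E}) ?_)
  intro s _
  cases s <;> simp

instance : TopologicalSpace PacSym := ⊥

instance : DiscreteTopology PacSym := ⟨rfl⟩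

/-- A countable intersection of `pdist`-open dense sets is nonempty. The product topology of the
discrete alphabet is compact Hausdorff, and `pdist` induces it. -/
lemma baire_nonempty (F : ℕ → Set PacX)
    (hF : ∀ n : ℕ, (∀ y ∈ F n, ∃ ε > (0 : ℝ), pball y ε ⊆ F n) ∧
      (∀ z : PacX, ∀ ε > (0 : ℝ), ∃ y ∈ F n, pdist z y < ε)) : (⋂ n : ℕ, F n).Nonempty := by
  have hopen : ∀ n, IsOpen (F n) := fun n => by
    rw [isOpen_iff_mem_nhds]
    intro y hy
    obtain ⟨ε, hε, hsub⟩ := (hF n).1 y hy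
    obtain ⟨N, -, hN⟩ := exists_radius hε
    have hcyl : (Set.Icc (-(N : ℤ)) N).pi (fun j => {y j}) ∈ nhds y :=
      (isOpen_set_pi (Set.finite_Icc _ _) (fun j _ => isOpen_discrete _)).mem_nhds
        (fun j _ => rfl)
    refine Filter.mem_of_superset hcyl fun z hz => hsub ?_
    exact (pdist_lt_of_agree fun j hj => (hz j ⟨by lia, by lia⟩).symm).trans hN
  have hdense : ∀ n, Dense (F n) := fun n => by
    intro z
    rw [mem_closure_iff_nhds]
    intro U hU
    rw [nhds_pi, Filter.mem_pi] at hU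
    obtain ⟨I, hI, t, ht, hsub⟩ := hU
    obtain ⟨N, hN⟩ := (hI.image Int.natAbs).bddAbove
    obtain ⟨y, hy, hyz⟩ := (hF n).2 z ((2 : ℝ) ^ (-(N : ℤ))) (by positivity)
    refine ⟨y, hsub fun j hj => ?_, hy⟩
    have hjN : j.natAbs ≤ N := hN ⟨j, hj, rfl⟩
    have : z j = y j := by
      by_contra hne
      have h1 := (le_pdist_of_ne hne).trans_lt hyz
      rw [zpow_lt_zpow_iff_right₀ (by norm_num)] at h1
      lia
    rw [← this]
    exact mem_of_mem_nhds (ht j)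
  have : Nonempty PacX := ⟨fun _ => O⟩
  exact (dense_iInter_of_isOpen_nat hopen hdense).nonempty

/-- The Pacman CA has no equicontinuity points; in particular the set of equicontinuity
points is not residual (so the CA is not almost equicontinuous), and the CA is
sensitive to initial conditions. -/
theorem pacman_no_eq_points_and_sensitive :
    {x : PacX | eqPt x} = ∅ ∧
    (¬ ∃ F : ℕ → Set PacX,
        (∀ n : ℕ, (∀ y ∈ F n, ∃ ε > (0 : ℝ), pball y ε ⊆ F n) ∧ (∀ z : PacX, ∀ ε > (0 : ℝ), ∃ y ∈ F n, pdist z y < ε)) ∧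
        (⋂ n : ℕ, F n) ⊆ {x : PacX | eqPt x}) ∧
    ∃ δ > (0 : ℝ), ∀ x : PacX, ∀ η > (0 : ℝ), ∃ y : PacX, pdist x y < η ∧
      ∃ n : ℕ, pdist (pacT^[n] x) (pacT^[n] y) > δ := by
  refine ⟨?_, ?_, 1 / 4, by norm_num, sensitive⟩
  · exact Set.eq_empty_of_forall_notMem not_eqPt
  · rintro ⟨F, hF, hsub⟩
    obtain ⟨x, hx⟩ := baire_nonempty F hF
    exact not_eqPt x (hsub hx)
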